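/- In the transverse p-spin model with p ≥ 2, for every N ≥ p, β > 0, J > 0 and b ≥ 0, setting α_p(N) = N!/((N−p)!·N^p), one has E[⟨S_1^z S_2^z ⋯ S_p^z⟩²] ≥ Φ(pβb · E[⟨S_1^x⟩]) + (2/(βJ·N·α_p(N))) · E[⟨U_N⟩]. -/

import Mathlib

open Matrix MeasureTheory ProbabilityTheory
open scoped Kronecker

noncomputable section

abbrev Conf (N : ℕ) := Fin N → Fin 2

def Sz (N : ℕ) (j : Fin N) : Matrix (Conf N) (Conf N) ℂ :=
  Matrix.diagonal fun σ => if σ j = 0 then 1 else -1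

def Sx (N : ℕ) (j : Fin N) : Matrix (Conf N) (Conf N) ℂ :=
  Matrix.of fun σ τ => if τ = Function.update σ j (1 - σ j) then 1 else 0

/-- The product `S^z_{j_1} S^z_{j_2} ⋯ S^z_{j_p}` over an index set `s`. -/
def SzProd (N : ℕ) (s : Finset (Fin N)) : Matrix (Conf N) (Conf N) ℂ :=
  Matrix.diagonal fun σ => ∏ j ∈ s, (if σ j = 0 then (1 : ℂ) else -1)

/-- The zero-field `p`-spin Hamiltonian
`U_N = −√(p!/(2N^{p−1})) Σ_{j_1<⋯<j_p} g_{j_1⋯j_p} S^z_{j_1} ⋯ S^z_{j_p}`. -/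
def UNp (N p : ℕ) (g : Finset (Fin N) → ℝ) : Matrix (Conf N) (Conf N) ℂ :=
  (-(Real.sqrt ((Nat.factorial p : ℝ) / (2 * (N : ℝ) ^ (p - 1))))) •
    ∑ s : Finset (Fin N), if s.card = p then g s • SzProd N s else 0

/-- The transverse `p`-spin Hamiltonian `H_N = J·U_N − b·Σ_j S_j^x`. -/
def HNp (N p : ℕ) (J b : ℝ) (g : Finset (Fin N) → ℝ) : Matrix (Conf N) (Conf N) ℂ :=
  J • UNp N p g - b • ∑ j : Fin N, Sx N j

/-- Gibbs expectation (real part of the trace ratio). -/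
def gibbs {n : Type*} [Fintype n] [DecidableEq n] (β : ℝ) (H A : Matrix n n ℂ) : ℝ :=
  ((NormedSpace.exp ((-β) • H) * A).trace / (NormedSpace.exp ((-β) • H)).trace).re

/-- The replica-overlap operator `R_N = N⁻¹ Σ_j S_j^z ⊗ S_j^z` on `ℋ_N ⊗ ℋ_N`. -/
def RN (N : ℕ) : Matrix (Conf N × Conf N) (Conf N × Conf N) ℂ :=
  ((N : ℝ)⁻¹) • ∑ j : Fin N, (Sz N j) ⊗ₖ (Sz N j)

/-- The duplicated Hamiltonian `H_N ⊗ 1 + 1 ⊗ H_N`. -/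
def Hdup (N p : ℕ) (J b : ℝ) (g : Finset (Fin N) → ℝ) :
    Matrix (Conf N × Conf N) (Conf N × Conf N) ℂ :=
  (HNp N p J b g) ⊗ₖ (1 : Matrix (Conf N) (Conf N) ℂ)
    + (1 : Matrix (Conf N) (Conf N) ℂ) ⊗ₖ (HNp N p J b g)

/-- `α_p(N) = N!/((N−p)!·N^p)`. -/
def alphaP (N p : ℕ) : ℝ :=
  (Nat.factorial N : ℝ) / ((Nat.factorial (N - p) : ℝ) * (N : ℝ) ^ p)

/-- The index set `{1, …, p}` of the first `p` spins. -/
def firstP (N p : ℕ) : Finset (Fin N) := Finset.univ.filter fun j : Fin N => (j : ℕ) < p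


section PartA
open Real Set

lemma sc_D (r : ℝ) (hr : 0 ≤ r) : 0 ≤ sinh r ^ 2 + r * tanh r - 2 * r ^ 2 := by
  have ht : ∀ x : ℝ, HasDerivAt tanh (1 / cosh x ^ 2) x := by
    intro x
    have h := (hasDerivAt_sinh x).div (hasDerivAt_cosh x) (cosh_pos x).ne'
    have e : (sinh / cosh) = tanh := by ext y; simp [tanh_eq_sinh_div_cosh]
    rw [e] at h
    have e2 : cosh x * cosh x - sinh x * sinh x = 1 := by
      have := cosh_sq x
      nlinarith
    rwa [e2] at h
  have h1 : ∀ x : ℝ, HasDerivAt (fun r => sinh r ^ 2 + r * tanh r - 2 * r ^ 2)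
      (2 * sinh x * cosh x + tanh x + x / cosh x ^ 2 - 4 * x) x := by
    intro x
    have := (((hasDerivAt_sinh x).pow 2).add ((hasDerivAt_id x).mul (ht x))).sub
      (((hasDerivAt_id x).pow 2).const_mul 2)
    convert! this using 1
    simp; ring
  have h2 : ∀ x : ℝ, HasDerivAt (fun x => 2 * sinh x * cosh x + tanh x + x / cosh x ^ 2 - 4 * x)
      (4 * sinh x ^ 2 - 2 * tanh x ^ 2 - 2 * x * tanh x / cosh x ^ 2) x := by
    intro x
    have hc := (cosh_pos x).ne'
    have := (((((hasDerivAt_sinh x).const_mul 2).mul (hasDerivAt_cosh x)).add (ht x)).add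
      ((hasDerivAt_id x).div ((hasDerivAt_cosh x).pow 2) (pow_ne_zero 2 hc))).sub
      ((hasDerivAt_id x).const_mul 4)
    convert! this using 1
    simp only [id, tanh_eq_sinh_div_cosh]
    have := cosh_sq x
    field_simp
    have h4 : sinh x ^ 2 = cosh x ^ 2 - 1 := by linarith
    simp
    ring_nf
    simp only [h4]
    ring
  have hp : ∀ x : ℝ, 0 ≤ x →
      0 ≤ 4 * sinh x ^ 2 - 2 * tanh x ^ 2 - 2 * x * tanh x / cosh x ^ 2 := by
    intro x hx
    have hc1 := one_le_cosh x
    have hs := self_le_sinh_iff.2 hx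
    have hs0 := sinh_nonneg_iff.2 hx
    have e1 : tanh x ≤ sinh x := by
      rw [tanh_eq_sinh_div_cosh]; exact div_le_self hs0 hc1
    have e0 : 0 ≤ tanh x := by rw [tanh_eq_sinh_div_cosh]; positivity
    have e2 : 2 * x * tanh x / cosh x ^ 2 ≤ 2 * x * tanh x :=
      div_le_self (by positivity) (one_le_pow₀ hc1)
    have e3 : x * tanh x ≤ sinh x * sinh x := mul_le_mul hs e1 e0 hs0
    have e4 : tanh x ^ 2 ≤ sinh x ^ 2 := pow_le_pow_left₀ e0 e1 2
    nlinarith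
  have m2 : MonotoneOn (fun x => 2 * sinh x * cosh x + tanh x + x / cosh x ^ 2 - 4 * x) (Ici 0) :=
    monotoneOn_of_deriv_nonneg (convex_Ici 0) (fun x _ => (h2 x).continuousAt.continuousWithinAt)
      (fun x _ => (h2 x).differentiableAt.differentiableWithinAt)
      (fun x hx => by rw [(h2 x).deriv]; exact hp x (interior_subset hx))
  have m1 : MonotoneOn (fun r => sinh r ^ 2 + r * tanh r - 2 * r ^ 2) (Ici 0) :=
    monotoneOn_of_deriv_nonneg (convex_Ici 0) (fun x _ => (h1 x).continuousAt.continuousWithinAt)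
      (fun x _ => (h1 x).differentiableAt.differentiableWithinAt)
      (fun x hx => by
        rw [(h1 x).deriv]
        have := m2 (mem_Ici.2 le_rfl) (interior_subset hx) (interior_subset hx)
        simpa using this)
  have := m1 (mem_Ici.2 le_rfl) (mem_Ici.2 hr) hr
  simpa using this

noncomputable def scM (y : ℝ) : ℝ := (sinh y * cosh y - y) / (y ^ 2 * (sinh y * cosh y + y))

lemma sc_M_anti : AntitoneOn scM (Ioi 0) := by
  have hd : ∀ y : ℝ, 0 < y → HasDerivAt scM
      (-(2 * y * cosh y * (sinh y ^ 2 * cosh y + y * sinh y - 2 * y ^ 2 * cosh y))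
        / (y ^ 2 * (sinh y * cosh y + y)) ^ 2) y := by
    intro y hy
    have hs := sinh_pos_iff.2 hy
    have hc := cosh_pos y
    have := (((hasDerivAt_sinh y).mul (hasDerivAt_cosh y)).sub (hasDerivAt_id y)).div
      (((hasDerivAt_id y).pow 2).mul (((hasDerivAt_sinh y).mul (hasDerivAt_cosh y)).add
        (hasDerivAt_id y))) (by simp only [Pi.add_apply, Pi.mul_apply, Pi.pow_apply, id]; positivity)
    unfold scM
    convert! this using 1
    congr 1
    simp
    have h4 : cosh y ^ 2 = sinh y ^ 2 + 1 := cosh_sq y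
    have h3 : cosh y ^ 3 = (sinh y ^ 2 + 1) * cosh y := by rw [← h4]; ring
    have h5 : cosh y ^ 4 = (sinh y ^ 2 + 1) ^ 2 := by rw [← h4]; ring
    ring_nf
    simp only [h4, h3, h5]
    ring
  apply antitoneOn_of_deriv_nonpos (convex_Ioi 0)
    (fun x hx => (hd x hx).continuousAt.continuousWithinAt)
    (fun x hx => (hd x (interior_subset hx)).differentiableAt.differentiableWithinAt)
  intro x hx
  have hx : 0 < x := interior_subset hx
  rw [(hd x hx).deriv]
  have := sc_D x hx.le
  have hc := cosh_pos x
  rw [neg_div, neg_nonpos]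
  have e : sinh x ^ 2 * cosh x + x * sinh x - 2 * x ^ 2 * cosh x
      = cosh x * (sinh x ^ 2 + x * tanh x - 2 * x ^ 2) := by
    rw [tanh_eq_sinh_div_cosh]; field_simp
  rw [e]
  positivity

lemma sc_tangent (r : ℝ) (hr : 0 < r) (y : ℝ) (hy : 0 < y) :
    tanh r / r + scM r * (r * tanh r) ≤ tanh y / y + scM r * (y * tanh y) := by
  set m := scM r with hm
  have hd : ∀ y : ℝ, 0 < y → HasDerivAt (fun y => tanh y / y + m * (y * tanh y))
      ((sinh y * cosh y + y) / cosh y ^ 2 * (m - scM y)) y := by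
    intro y hy
    have hc := cosh_pos y
    have hs := sinh_pos_iff.2 hy
    have ht : HasDerivAt tanh (1 / cosh y ^ 2) y := by
      have h := (hasDerivAt_sinh y).div (hasDerivAt_cosh y) (cosh_pos y).ne'
      have e : (sinh / cosh) = tanh := by ext y; simp [tanh_eq_sinh_div_cosh]
      rw [e] at h
      have e2 : cosh y * cosh y - sinh y * sinh y = 1 := by
        have := cosh_sq y
        nlinarith
      rwa [e2] at h
    have := (ht.div (hasDerivAt_id y) hy.ne').add (((hasDerivAt_id y).mul ht).const_mul m)
    convert! this using 1
    simp only [id, tanh_eq_sinh_div_cosh, scM]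
    field_simp
    ring
  rcases le_total y r with h | h
  · have : AntitoneOn (fun y => tanh y / y + m * (y * tanh y)) (Icc y r) := by
      apply antitoneOn_of_deriv_nonpos (convex_Icc _ _)
        (fun x hx => (hd x (hy.trans_le hx.1)).continuousAt.continuousWithinAt)
        (fun x hx => (hd x (hy.trans_le (interior_subset hx).1)).differentiableAt.differentiableWithinAt)
      intro x hx
      have hx := interior_subset hx
      have hx0 := hy.trans_le hx.1
      have hs := sinh_pos_iff.2 hx0
      have hc := cosh_pos x
      rw [(hd x hx0).deriv]
      have := sc_M_anti hx0 hr hx.2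
      exact mul_nonpos_of_nonneg_of_nonpos (by positivity) (by linarith)
    exact this ⟨le_rfl, h⟩ ⟨h, le_rfl⟩ h
  · have : MonotoneOn (fun y => tanh y / y + m * (y * tanh y)) (Icc r y) := by
      apply monotoneOn_of_deriv_nonneg (convex_Icc _ _)
        (fun x hx => (hd x (hr.trans_le hx.1)).continuousAt.continuousWithinAt)
        (fun x hx => (hd x (hr.trans_le (interior_subset hx).1)).differentiableAt.differentiableWithinAt)
      intro x hx
      have hx := interior_subset hx
      have hx0 := hr.trans_le hx.1
      have hs := sinh_pos_iff.2 hx0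
      have hc := cosh_pos x
      rw [(hd x hx0).deriv]
      have := sc_M_anti hr hx0 hx.1
      exact mul_nonneg (by positivity) (by linarith)
    exact this ⟨le_rfl, h⟩ ⟨h, le_rfl⟩ h

/-- The log-mean. -/
noncomputable def lmean (a b : ℝ) : ℝ := ∫ s in (0:ℝ)..1, exp (s * a + (1 - s) * b)

lemma lmean_self (a : ℝ) : lmean a a = exp a := by
  unfold lmean
  have : ∀ s : ℝ, exp (s * a + (1 - s) * a) = exp a := fun s => by congr 1; ring
  simp [this]

lemma lmean_ne (a b : ℝ) (h : a ≠ b) : lmean a b = (exp a - exp b) / (a - b) := by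
  unfold lmean
  have hab : a - b ≠ 0 := sub_ne_zero.2 h
  have hd : ∀ s : ℝ, HasDerivAt (fun s => exp (s * a + (1 - s) * b) / (a - b))
      (exp (s * a + (1 - s) * b)) s := by
    intro s
    have h1 : HasDerivAt (fun s : ℝ => s * a + (1 - s) * b) (a - b) s := by
      have := ((hasDerivAt_id s).mul_const a).add (((hasDerivAt_id s).const_sub 1).mul_const b)
      convert! this using 1
      simp; ring
    have := h1.exp.div_const (a - b)
    convert! this using 1
    field_simp
  rw [intervalIntegral.integral_eq_sub_of_hasDerivAt (fun s _ => hd s)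
    (Continuous.intervalIntegrable (by fun_prop) _ _)]
  simp; ring

/-- `C, m` is a supporting line. -/
noncomputable def Supp (C m : ℝ) : Prop := ∀ a b : ℝ,
  C * ((exp a + exp b) / 2) - m * ((a - b) * (exp a - exp b) / 4) ≤ lmean a b

lemma supp_of (C m : ℝ) (h : ∀ y : ℝ, 0 < y → C ≤ tanh y / y + m * (y * tanh y)) : Supp C m := by
  have hC : C ≤ 1 := by
    have h1 : Filter.Tendsto (fun y : ℝ => sinh y / y / cosh y + m * (y * tanh y)) (nhdsWithin 0 (Ioi 0)) (nhds (1 / cosh 0 + m * (0 * tanh 0))) := by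
      have h0 : Filter.Tendsto (fun y : ℝ => sinh y / y) (nhdsWithin 0 (Ioi 0)) (nhds 1) := by
        have := (hasDerivAt_sinh 0).tendsto_slope
        rw [cosh_zero] at this
        refine (this.mono_left (nhdsWithin_mono _ (fun x hx => ne_of_gt hx))).congr ?_
        intro x; simp [slope_def_field]
      refine Filter.Tendsto.add (h0.div ?_ (by simp)) ?_
      · exact (continuous_cosh.tendsto 0).mono_left nhdsWithin_le_nhds
      · refine Filter.Tendsto.mono_left (Continuous.tendsto ?_ 0) nhdsWithin_le_nhds
        have : Continuous tanh := by
          have : tanh = fun x => sinh x / cosh x := by ext x; exact tanh_eq_sinh_div_cosh x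
          rw [this]
          exact continuous_sinh.div continuous_cosh (fun x => (cosh_pos x).ne')
        fun_prop
    simp at h1
    refine ge_of_tendsto h1 ?_
    filter_upwards [self_mem_nhdsWithin] with y hy
    refine (h y hy).trans (le_of_eq ?_)
    congr 1
    rw [tanh_eq_sinh_div_cosh]; ring
  have key : ∀ a b : ℝ, b < a → C * ((exp a + exp b) / 2) - m * ((a - b) * (exp a - exp b) / 4) ≤ lmean a b := by
    intro a b hab
    rw [lmean_ne a b hab.ne']
    set y := (a - b) / 2 with hy
    have hy0 : 0 < y := by rw [hy]; linarith
    set M := (a + b) / 2 with hM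
    have ha : a = M + y := by rw [hy, hM]; ring
    have hb : b = M - y := by rw [hy, hM]; ring
    have e1 : exp a = exp M * (cosh y + sinh y) := by rw [ha, exp_add, cosh_add_sinh]
    have e2 : exp b = exp M * (cosh y - sinh y) := by rw [hb, sub_eq_add_neg, exp_add, cosh_sub_sinh]
    have e3 : a - b = 2 * y := by rw [hy]; ring
    rw [e1, e2, e3]
    have hc := cosh_pos y
    have := mul_le_mul_of_nonneg_left (h y hy0) (mul_pos (exp_pos M) hc).le
    have e4 : exp M * cosh y * (tanh y / y + m * (y * tanh y)) =
      exp M * (sinh y / y) + m * (exp M * y * sinh y) := by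
      rw [tanh_eq_sinh_div_cosh]; field_simp
    have e5 : (exp M * (cosh y + sinh y) - exp M * (cosh y - sinh y)) / (2 * y) = exp M * (sinh y / y) := by
      field_simp; ring
    rw [e5]
    rw [e4] at this
    nlinarith
  intro a b
  rcases lt_trichotomy a b with h1 | h1 | h1
  · have := key b a h1
    have e : lmean a b = lmean b a := by
      rw [lmean_ne _ _ h1.ne, lmean_ne _ _ h1.ne', ← neg_sub (exp b), ← neg_sub b, neg_div_neg_eq]
    rw [e]; linarith
  · subst h1
    rw [lmean_self]
    have := exp_pos a
    nlinarith
  · exact key a b h1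

lemma supp_upper (a b : ℝ) : lmean a b ≤ (exp a + exp b) / 2 := by
  have : lmean a b ≤ ∫ s in (0:ℝ)..1, (s * exp a + (1 - s) * exp b) := by
    unfold lmean
    apply intervalIntegral.integral_mono_on (by norm_num)
      (Continuous.intervalIntegrable (by fun_prop) _ _) (Continuous.intervalIntegrable (by fun_prop) _ _)
    intro s hs
    have := convexOn_exp.2 (mem_univ a) (mem_univ b) hs.1 (by linarith [hs.2] : 0 ≤ 1 - s) (by ring)
    simpa using this
  refine this.trans (le_of_eq ?_)
  have e : ∀ s : ℝ, s * exp a + (1 - s) * exp b = s * (exp a - exp b) + exp b := fun s => by ring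
  simp only [e]
  rw [intervalIntegral.integral_add (Continuous.intervalIntegrable (by fun_prop) _ _) (Continuous.intervalIntegrable (by fun_prop) _ _)]
  simp [intervalIntegral.integral_mul_const]
  ring

lemma lmean_nonneg (a b : ℝ) : 0 ≤ lmean a b :=
  intervalIntegral.integral_nonneg (by norm_num) (fun s _ => (exp_pos _).le)

lemma exists_supp (Φ : ℝ → ℝ) (hΦ : ∀ r : ℝ, 0 < r → Φ (r * Real.tanh r) = Real.tanh r / r)
    (hΦ0 : Φ 0 = 1) (x : ℝ) (hx : 0 ≤ x) : ∃ C m, Supp C m ∧ Φ x = C - m * x := by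
  rcases hx.eq_or_lt with h | h
  · subst h
    refine ⟨1, 1, supp_of _ _ ?_, by simp [hΦ0]⟩
    intro y hy
    have hc := cosh_pos y
    have hs := sinh_pos_iff.2 hy
    have h1 : y * cosh y ≤ sinh y * (1 + y ^ 2) := by
      have hd : ∀ x, HasDerivAt (fun y => sinh y * (1 + y ^ 2) - y * cosh y) (x * (x * cosh x + sinh x)) x := by
        intro x
        have := ((hasDerivAt_sinh x).mul (((hasDerivAt_id x).pow 2).const_add 1)).sub
          ((hasDerivAt_id x).mul (hasDerivAt_cosh x))
        convert! this using 1
        simp; ring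
      have : MonotoneOn (fun y => sinh y * (1 + y ^ 2) - y * cosh y) (Ici 0) :=
        monotoneOn_of_deriv_nonneg (convex_Ici 0) (fun x _ => (hd x).continuousAt.continuousWithinAt)
          (fun x _ => (hd x).differentiableAt.differentiableWithinAt)
          (fun x hx => by
            rw [(hd x).deriv]
            have hx : 0 ≤ x := interior_subset hx
            have := sinh_nonneg_iff.2 hx
            have := cosh_pos x
            positivity)
      have := this (mem_Ici.2 le_rfl) (mem_Ici.2 hy.le) hy.le
      simp at this
      nlinarith
    rw [tanh_eq_sinh_div_cosh]
    have : sinh y / cosh y / y + 1 * (y * (sinh y / cosh y)) = sinh y * (1 + y ^ 2) / (y * cosh y) := by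
      field_simp
    rw [this, le_div_iff₀ (by positivity)]
    nlinarith
  · have ht : Continuous tanh := by
      have : tanh = fun x => sinh x / cosh x := by ext x; exact tanh_eq_sinh_div_cosh x
      rw [this]
      exact continuous_sinh.div continuous_cosh (fun x => (cosh_pos x).ne')
    have hub : x ≤ (x + 1) * tanh (x + 1) := by
      set r := x + 1 with hr
      have hr0 : 0 < r := by linarith
      have hc := cosh_pos r
      have hs := self_le_sinh_iff.2 hr0.le
      rw [tanh_eq_sinh_div_cosh, ← mul_div_assoc, le_div_iff₀ hc]
      have h1 : cosh r = sinh r + exp (-r) := by rw [← cosh_sub_sinh]; ring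
      have h2 : exp (-r) ≤ 1 := exp_le_one_iff.2 (by linarith)
      have h3 : x = r - 1 := by rw [hr]; ring
      rw [h1, h3]
      have := exp_pos (-r)
      nlinarith
    obtain ⟨r, hr, hrx⟩ := intermediate_value_Icc (by linarith : (0:ℝ) ≤ x + 1)
      (f := fun r => r * tanh r) (by fun_prop) (⟨by simpa using hx, hub⟩ : x ∈ Icc _ _)
    simp only at hrx
    have hr0 : 0 < r := by
      rcases hr.1.eq_or_lt with h' | h'
      · subst h'; simp at hrx; linarith
      · exact h'
    refine ⟨tanh r / r + scM r * (r * tanh r), scM r, supp_of _ _ (fun y hy => sc_tangent r hr0 y hy), ?_⟩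
    rw [← hrx, hΦ r hr0]; ring

end PartA
open Matrix MeasureTheory

lemma mexp_continuous {n : Type*} [Fintype n] [DecidableEq n] :
    Continuous (NormedSpace.exp : Matrix n n ℂ → Matrix n n ℂ) := by
  let _ : NormedRing (Matrix n n ℂ) := Matrix.linftyOpNormedRing
  let _ : NormedAlgebra ℝ (Matrix n n ℂ) := Matrix.linftyOpNormedAlgebra
  let _ : NormedAlgebra ℚ (Matrix n n ℂ) := NormedAlgebra.restrictScalars ℚ ℝ _
  exact NormedSpace.exp_continuous

lemma duh_deriv {n : Type*} [Fintype n] [DecidableEq n] (X Y B : Matrix n n ℂ) (s : ℝ) :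
    HasDerivAt (fun s : ℝ => (trace (NormedSpace.exp (s • Y) * NormedSpace.exp ((1 - s) • X) * B)).re)
      (trace (NormedSpace.exp (s • Y) * (Y - X) * NormedSpace.exp ((1 - s) • X) * B)).re s := by
  let _ : NormedRing (Matrix n n ℂ) := Matrix.linftyOpNormedRing
  let _ : NormedAlgebra ℝ (Matrix n n ℂ) := Matrix.linftyOpNormedAlgebra
  let _ : NormedAlgebra ℚ (Matrix n n ℂ) := NormedAlgebra.restrictScalars ℚ ℝ _
  have h1 : HasDerivAt (fun s : ℝ => NormedSpace.exp (s • Y)) (NormedSpace.exp (s • Y) * Y) s :=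
    hasDerivAt_exp_smul_const Y s
  have h2 : HasDerivAt (fun s : ℝ => NormedSpace.exp ((1 - s) • X)) (- (X * NormedSpace.exp ((1 - s) • X))) s := by
    have h := hasDerivAt_exp_smul_const' X (1 - s)
    have h' := h.scomp s ((hasDerivAt_id s).const_sub 1)
    rw [neg_smul, one_smul] at h'
    exact h'
  have h3 := (h1.mul h2).mul_const B
  let L : Matrix n n ℂ →ₗ[ℝ] ℝ := Complex.reLm ∘ₗ (Matrix.traceLinearMap n ℝ ℂ)
  have hL : Continuous L := by
    show Continuous (fun M : Matrix n n ℂ => (trace M).re)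
    exact Complex.continuous_re.comp (continuous_id.matrix_trace)
  let L' : Matrix n n ℂ →L[ℝ] ℝ := ⟨L, hL⟩
  have h4 := L'.hasFDerivAt.comp_hasDerivAt s h3
  have e : L' ((NormedSpace.exp (s • Y) * Y * NormedSpace.exp ((1 - s) • X) +
          NormedSpace.exp (s • Y) * -(X * NormedSpace.exp ((1 - s) • X))) * B)
      = (trace (NormedSpace.exp (s • Y) * (Y - X) * NormedSpace.exp ((1 - s) • X) * B)).re := by
    show (trace ((NormedSpace.exp (s • Y) * Y * NormedSpace.exp ((1 - s) • X) +
          NormedSpace.exp (s • Y) * -(X * NormedSpace.exp ((1 - s) • X))) * B)).re = _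
    congr 2
    noncomm_ring
  exact h4.congr_deriv e

def duh {n : Type*} [Fintype n] [DecidableEq n] (X A B : Matrix n n ℂ) : ℝ :=
  ∫ s in (0:ℝ)..1, (trace (NormedSpace.exp (s • X) * A * NormedSpace.exp ((1 - s) • X) * B)).re

lemma tr_hasDerivAt {n : Type*} [Fintype n] [DecidableEq n] (X A B : Matrix n n ℂ) (t : ℝ) :
    HasDerivAt (fun t : ℝ => (trace (NormedSpace.exp (X + t • A) * B)).re)
      (duh (X + t • A) A B) t := by
  set Z := X + t • A with hZ
  let K : ℝ → ℝ := fun h => ∫ s in (0:ℝ)..1,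
    (trace (NormedSpace.exp (s • (Z + h • A)) * A * NormedSpace.exp ((1 - s) • Z) * B)).re
  have hKc : Continuous K := by
    apply intervalIntegral.continuous_parametric_intervalIntegral_of_continuous'
    have e1 : Continuous fun q : ℝ × ℝ => (NormedSpace.exp (q.2 • (Z + q.1 • A)) : Matrix n n ℂ) :=
      mexp_continuous.comp (by fun_prop)
    have e2 : Continuous fun q : ℝ × ℝ => (NormedSpace.exp ((1 - q.2) • Z) : Matrix n n ℂ) :=
      mexp_continuous.comp (by fun_prop)
    exact Complex.continuous_re.comp
      (Continuous.matrix_trace (((e1.mul continuous_const).mul e2).mul continuous_const))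
  have hK0 : K 0 = duh Z A B := by simp [K, duh]
  have key : ∀ h : ℝ, (trace (NormedSpace.exp (Z + h • A) * B)).re
      = (trace (NormedSpace.exp Z * B)).re + h * K h := by
    intro h
    have := intervalIntegral.integral_eq_sub_of_hasDerivAt (a := 0) (b := 1)
      (fun s _ => duh_deriv Z (Z + h • A) B s) (by
        apply Continuous.intervalIntegrable
        have e1 : Continuous fun q : ℝ => (NormedSpace.exp (q • (Z + h • A)) : Matrix n n ℂ) :=
          mexp_continuous.comp (by fun_prop)
        have e2 : Continuous fun q : ℝ => (NormedSpace.exp ((1 - q) • Z) : Matrix n n ℂ) :=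
          mexp_continuous.comp (by fun_prop)
        exact Complex.continuous_re.comp
          (Continuous.matrix_trace (((e1.mul continuous_const).mul e2).mul continuous_const)))
    simp only [add_sub_cancel_left, Matrix.mul_smul, Matrix.smul_mul, trace_smul, Complex.smul_re,
      smul_eq_mul, intervalIntegral.integral_const_mul] at this
    simp only [one_smul, sub_self, zero_smul, NormedSpace.exp_zero, sub_zero, one_mul, mul_one] at this
    simp only [K]
    linarith
  have h0 : HasDerivAt (fun h : ℝ => (trace (NormedSpace.exp (Z + h • A) * B)).re) (K 0) 0 := by
    rw [hasDerivAt_iff_tendsto_slope]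
    refine ((hKc.tendsto 0).mono_left nhdsWithin_le_nhds).congr' ?_
    filter_upwards [self_mem_nhdsWithin] with h hh
    rw [slope_def_field, key h]
    have : h ≠ 0 := hh
    simp
    field_simp
  rw [hK0] at h0
  have h1 : HasDerivAt (fun u : ℝ => u - t) 1 t := (hasDerivAt_id t).sub_const t
  have h0' : HasDerivAt (fun h : ℝ => (trace (NormedSpace.exp (Z + h • A) * B)).re) (duh Z A B) (t - t) := by
    rwa [sub_self]
  have h2 := HasDerivAt.comp (h := fun u : ℝ => u - t) t h0' h1
  rw [mul_one] at h2
  have e : (fun u : ℝ => (trace (NormedSpace.exp (X + u • A) * B)).re)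
      = (fun h => (trace (NormedSpace.exp (Z + h • A) * B)).re) ∘ fun u => u - t := by
    funext u
    have e' : X + u • A = Z + (u - t) • A := by
      rw [hZ, add_assoc, ← add_smul, add_sub_cancel]
    simp only [Function.comp_apply]
    rw [e']
  rw [e]
  exact h2

lemma mexp_conj {n : Type*} [Fintype n] [DecidableEq n] (U M : Matrix n n ℂ)
    (h1 : U * star U = 1) (h2 : star U * U = 1) :
    NormedSpace.exp (U * M * star U) = U * NormedSpace.exp M * star U := 
  Matrix.exp_units_conj (⟨U, star U, h1, h2⟩ : (Matrix n n ℂ)ˣ) M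

lemma spec {n : Type*} [Fintype n] [DecidableEq n] (X A : Matrix n n ℂ)
    (hX : X.IsHermitian) (hA : A.IsHermitian) (hA2 : A * A = 1) :
    ∃ (x : n → ℝ) (w : n → n → ℝ) (d : n → ℝ), (∀ k l, 0 ≤ w k l) ∧ (∀ k l, w k l = w l k) ∧
      (∀ s : ℝ, (trace (NormedSpace.exp (s • X) * A * NormedSpace.exp ((1 - s) • X) * A)).re
        = ∑ k, ∑ l, w k l * Real.exp (s * x k + (1 - s) * x l)) ∧
      (trace (NormedSpace.exp X)).re = ∑ k, Real.exp (x k) ∧ (trace (NormedSpace.exp X)).im = 0 ∧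
      (trace (NormedSpace.exp X * A)).re = ∑ k, Real.exp (x k) * d k ∧
      (∀ k, |d k| ≤ 1) ∧ (∀ k, ∑ l, w k l = 1) ∧
      (trace (NormedSpace.exp X * (X - A * X * A))).re
        = ∑ k, ∑ l, w k l * (Real.exp (x k) * (x k - x l)) := by
  obtain ⟨U, h1, h2, x, hx⟩ : ∃ U : Matrix n n ℂ, U * star U = 1 ∧ star U * U = 1 ∧
      ∃ x : n → ℝ, X = U * diagonal (fun k => (x k : ℂ)) * star U := by
    refine ⟨hX.eigenvectorUnitary, Unitary.coe_mul_star_self _, Unitary.coe_star_mul_self _,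
      hX.eigenvalues, ?_⟩
    have := hX.spectral_theorem
    rwa [Unitary.conjStarAlgAut_apply] at this
  set B := star U * A * U with hB
  have hAB : A = U * B * star U := by
    rw [hB]
    calc A = (U * star U) * A * (U * star U) := by rw [h1]; simp
      _ = _ := by noncomm_ring
  have hBh : ∀ k l, B l k = star (B k l) := by
    have : star B = B := by
      rw [hB]; simp only [star_mul, star_star]
      rw [show star A = A from hA, mul_assoc]
    intro k l
    conv_lhs => rw [← this]
    rfl
  have hB2 : B * B = 1 := by
    calc B * B = star U * A * (U * star U) * A * U := by rw [hB]; noncomm_ring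
      _ = star U * (A * A) * U := by rw [h1]; noncomm_ring
      _ = 1 := by rw [hA2]; simp [h2]
  have hexp : ∀ s : ℝ, NormedSpace.exp (s • X) = U * diagonal (fun k => ((Real.exp (s * x k) : ℝ) : ℂ)) * star U := by
    intro s
    rw [hx]
    rw [show s • (U * diagonal (fun k => (x k : ℂ)) * star U) = U * diagonal (fun k => ((s * x k : ℝ) : ℂ)) * star U by
      rw [← Matrix.smul_mul, ← Matrix.mul_smul, ← Matrix.diagonal_smul]
      congr 3; ext k; simp]
    rw [mexp_conj U _ h1 h2, Matrix.exp_diagonal]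
    congr 3
    ext k
    rw [Pi.coe_exp]
    rw [← Complex.exp_eq_exp_ℂ, Complex.ofReal_exp]
  have hexp1 : NormedSpace.exp X = U * diagonal (fun k => ((Real.exp (x k) : ℝ) : ℂ)) * star U := by
    have := hexp 1
    simpa using this
  have htr : ∀ M : Matrix n n ℂ, trace (U * M * star U) = trace M := by
    intro M
    rw [trace_mul_comm, ← mul_assoc, h2, one_mul]
  have hcj : ∀ M M' : Matrix n n ℂ, (U * M * star U) * (U * M' * star U) = U * (M * M') * star U := by
    intro M M'
    calc _ = U * M * (star U * U) * M' * star U := by noncomm_ring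
      _ = _ := by rw [h2]; noncomm_ring
  have hw : ∀ k, ∑ l, Complex.normSq (B k l) = 1 := by
    intro k
    have := congr_fun (congr_fun hB2 k) k
    rw [Matrix.mul_apply, one_apply_eq] at this
    have h3 : (((∑ l, Complex.normSq (B k l) : ℝ)) : ℂ) = 1 := by
      rw [← this]
      push_cast
      refine Finset.sum_congr rfl fun l _ => ?_
      rw [hBh k l]
      exact (Complex.mul_conj _).symm
    exact_mod_cast h3
  have hq : ∀ k l, B k l * B l k = ((Complex.normSq (B k l) : ℝ) : ℂ) := by
    intro k l
    rw [hBh k l]; exact (Complex.mul_conj _)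
  refine ⟨x, fun k l => Complex.normSq (B k l), fun k => (B k k).re, fun k l => Complex.normSq_nonneg _,
    ?_, ?_, ?_, ?_, ?_, ?_, hw, ?_⟩
  · intro k l
    simp only
    rw [hBh k l]; exact (Complex.normSq_conj _).symm
  · intro s
    rw [hexp, hexp, hAB, hcj, hcj, hcj, htr]
    simp only [trace, diag_apply]
    simp only [Complex.re_sum]
    refine Finset.sum_congr rfl fun k _ => ?_
    rw [Matrix.mul_apply, Complex.re_sum]
    refine Finset.sum_congr rfl fun l _ => ?_
    rw [Matrix.mul_diagonal, Matrix.diagonal_mul]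
    rw [show ∀ a b : ℂ, a * B k l * b * B l k = a * b * (B k l * B l k) by intros; ring, hq]
    rw [Real.exp_add, ← Complex.ofReal_mul, ← Complex.ofReal_mul, Complex.ofReal_re]
    ring
  · rw [hexp1, htr, trace_diagonal, Complex.re_sum]; simp only [Complex.ofReal_re]
  · rw [hexp1, htr, trace_diagonal, Complex.im_sum]; simp only [Complex.ofReal_im]; simp
  · rw [hexp1, hAB, hcj, htr]
    simp only [trace, diag_apply, Matrix.diagonal_mul, Complex.re_sum, Complex.re_ofReal_mul]
  · intro k
    have h3 : Complex.normSq (B k k) ≤ 1 := by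
      rw [← hw k]
      exact Finset.single_le_sum (f := fun l => Complex.normSq (B k l)) (fun l _ => Complex.normSq_nonneg _) (Finset.mem_univ k)
    rw [Complex.normSq_apply] at h3
    rw [abs_le_one_iff_mul_self_le_one]
    nlinarith [mul_self_nonneg (B k k).im]
  · have e : X - A * X * A = U * (diagonal (fun k => (x k : ℂ)) - B * diagonal (fun k => (x k : ℂ)) * B) * star U := by
      rw [Matrix.mul_sub, Matrix.sub_mul, ← hcj, ← hcj, ← hAB, ← hx]
    rw [e, hexp1, hcj, htr]
    simp only [trace, diag_apply, Matrix.diagonal_mul, Matrix.sub_apply, diagonal_apply_eq]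
    simp only [Complex.re_sum]
    refine Finset.sum_congr rfl fun k _ => ?_
    rw [Complex.re_ofReal_mul, Complex.sub_re, Complex.ofReal_re]
    rw [Matrix.mul_apply, Complex.re_sum]
    have : x k = ∑ l, Complex.normSq (B k l) * x k := by rw [← Finset.sum_mul, hw, one_mul]
    rw [show ∀ S : ℝ, x k - S = ∑ l, Complex.normSq (B k l) * x k - S from fun S => by rw [← this]]
    rw [← Finset.sum_sub_distrib, Finset.mul_sum]
    refine Finset.sum_congr rfl fun l _ => ?_
    rw [Matrix.mul_diagonal]
    rw [show B k l * (x l : ℂ) * B l k = (x l : ℂ) * (B k l * B l k) by ring, hq, ← Complex.ofReal_mul, Complex.ofReal_re]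
    ring




section gib
variable {n : Type*} [Fintype n] [DecidableEq n]

lemma trexp_pos [Nonempty n] (X : Matrix n n ℂ) (hX : X.IsHermitian) :
    0 < (trace (NormedSpace.exp X)).re ∧ (trace (NormedSpace.exp X)).im = 0 := by
  obtain ⟨x, w, d, -, -, -, h1, h2, -⟩ := spec X 1 hX Matrix.isHermitian_one (by simp)
  refine ⟨?_, h2⟩
  rw [h1]
  exact Finset.sum_pos (fun k _ => Real.exp_pos _) Finset.univ_nonempty

lemma herm_smul (β : ℝ) {H : Matrix n n ℂ} (hH : H.IsHermitian) : (β • H).IsHermitian := by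
  unfold Matrix.IsHermitian
  rw [conjTranspose_smul, hH.eq]; simp

lemma gibbs_eq [Nonempty n] (β : ℝ) (H M : Matrix n n ℂ) (hH : H.IsHermitian) :
    gibbs β H M = (trace (NormedSpace.exp ((-β) • H) * M)).re / (trace (NormedSpace.exp ((-β) • H))).re := by
  obtain ⟨h1, h2⟩ := trexp_pos ((-β) • H) (herm_smul _ hH)
  unfold gibbs
  set z := trace (NormedSpace.exp ((-β) • H)) with hz
  have : z = ((z.re : ℝ) : ℂ) := by apply Complex.ext <;> simp [h2]
  rw [this, Complex.div_ofReal_re, Complex.ofReal_re]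

lemma tr_abs_le (X A : Matrix n n ℂ) (hX : X.IsHermitian) (hA : A.IsHermitian) (hA2 : A * A = 1) :
    |(trace (NormedSpace.exp X * A)).re| ≤ (trace (NormedSpace.exp X)).re := by
  obtain ⟨x, w, d, -, -, -, h1, h2, h3, h4, -⟩ := spec X A hX hA hA2
  rw [h1, h3]
  refine (Finset.abs_sum_le_sum_abs _ _).trans (Finset.sum_le_sum fun k _ => ?_)
  rw [abs_mul, abs_of_pos (Real.exp_pos _)]
  exact mul_le_of_le_one_right (Real.exp_pos _).le (h4 k)

lemma gibbs_abs_le [Nonempty n] (β : ℝ) (H A : Matrix n n ℂ) (hH : H.IsHermitian) (hA : A.IsHermitian)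
    (hA2 : A * A = 1) : |gibbs β H A| ≤ 1 := by
  rw [gibbs_eq β H A hH]
  obtain ⟨h1, h2⟩ := trexp_pos ((-β) • H) (herm_smul _ hH)
  rw [abs_div, abs_of_pos h1, div_le_one h1]
  exact tr_abs_le _ _ (herm_smul _ hH) hA hA2

lemma duh_bounds (X A : Matrix n n ℂ) (hX : X.IsHermitian) (hA : A.IsHermitian) (hA2 : A * A = 1) :
    0 ≤ duh X A A ∧ duh X A A ≤ (trace (NormedSpace.exp X)).re ∧
    0 ≤ (trace (NormedSpace.exp X * (X - A * X * A))).re ∧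
    ∀ C m, Supp C m → C * (trace (NormedSpace.exp X)).re
      - m * ((trace (NormedSpace.exp X * (X - A * X * A))).re / 2) ≤ duh X A A := by
  obtain ⟨x, w, d, hw0, hws, h0, h1, -, -, -, hw1, hT⟩ := spec X A hX hA hA2
  have hd : duh X A A = ∑ k, ∑ l, w k l * lmean (x k) (x l) := by
    unfold duh lmean
    simp only [h0]
    rw [intervalIntegral.integral_finsetSum]
    · refine Finset.sum_congr rfl fun k _ => ?_
      rw [intervalIntegral.integral_finsetSum]
      · refine Finset.sum_congr rfl fun l _ => ?_
        rw [intervalIntegral.integral_const_mul]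
      · intro l _
        exact Continuous.intervalIntegrable (by fun_prop) _ _
    · intro l _
      exact Continuous.intervalIntegrable (by fun_prop) _ _
  have hZ1 : ∑ k, ∑ l, w k l * Real.exp (x k) = (trace (NormedSpace.exp X)).re := by
    rw [h1]
    refine Finset.sum_congr rfl fun k _ => ?_
    rw [← Finset.sum_mul, hw1, one_mul]
  have hZ2 : ∑ k, ∑ l, w k l * Real.exp (x l) = (trace (NormedSpace.exp X)).re := by
    rw [← hZ1, Finset.sum_comm]
    exact Finset.sum_congr rfl fun k _ => Finset.sum_congr rfl fun l _ => by rw [hws]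
  have hT2 : ∑ k, ∑ l, w k l * (Real.exp (x l) * (x l - x k)) = (trace (NormedSpace.exp X * (X - A * X * A))).re := by
    rw [hT, Finset.sum_comm]
    exact Finset.sum_congr rfl fun k _ => Finset.sum_congr rfl fun l _ => by rw [hws]
  have hTT : ∑ k, ∑ l, w k l * ((x k - x l) * (Real.exp (x k) - Real.exp (x l)))
      = 2 * (trace (NormedSpace.exp X * (X - A * X * A))).re := by
    rw [two_mul]
    nth_rewrite 1 [hT]
    rw [← hT2, ← Finset.sum_add_distrib]
    refine Finset.sum_congr rfl fun k _ => ?_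
    rw [← Finset.sum_add_distrib]
    refine Finset.sum_congr rfl fun l _ => ?_
    ring
  have hZZ : ∑ k, ∑ l, w k l * ((Real.exp (x k) + Real.exp (x l)) / 2) = (trace (NormedSpace.exp X)).re := by
    have : ∑ k, ∑ l, w k l * ((Real.exp (x k) + Real.exp (x l)) / 2)
      = (∑ k, ∑ l, w k l * Real.exp (x k) + ∑ k, ∑ l, w k l * Real.exp (x l)) / 2 := by
      rw [← Finset.sum_add_distrib, Finset.sum_div]
      refine Finset.sum_congr rfl fun k _ => ?_
      rw [← Finset.sum_add_distrib, Finset.sum_div]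
      refine Finset.sum_congr rfl fun l _ => ?_
      ring
    rw [this, hZ1, hZ2]; ring
  refine ⟨?_, ?_, ?_, ?_⟩
  · rw [hd]
    exact Finset.sum_nonneg fun k _ => Finset.sum_nonneg fun l _ => mul_nonneg (hw0 k l) (lmean_nonneg _ _)
  · rw [hd, ← hZZ]
    exact Finset.sum_le_sum fun k _ => Finset.sum_le_sum fun l _ => mul_le_mul_of_nonneg_left (supp_upper _ _) (hw0 k l)
  · have : 0 ≤ ∑ k, ∑ l, w k l * ((x k - x l) * (Real.exp (x k) - Real.exp (x l))) := by
      refine Finset.sum_nonneg fun k _ => Finset.sum_nonneg fun l _ => mul_nonneg (hw0 k l) ?_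
      rcases le_total (x k) (x l) with h | h
      · exact mul_nonneg_of_nonpos_of_nonpos (by linarith) (by linarith [Real.exp_le_exp.2 h])
      · exact mul_nonneg (by linarith) (by linarith [Real.exp_le_exp.2 h])
    linarith
  · intro C m hS
    have : C * (trace (NormedSpace.exp X)).re
      - m * ((trace (NormedSpace.exp X * (X - A * X * A))).re / 2)
      = ∑ k, ∑ l, w k l * (C * ((Real.exp (x k) + Real.exp (x l)) / 2) - m * ((x k - x l) * (Real.exp (x k) - Real.exp (x l)) / 4)) := by
      have e : (trace (NormedSpace.exp X * (X - A * X * A))).re / 2 = (∑ k, ∑ l, w k l * ((x k - x l) * (Real.exp (x k) - Real.exp (x l)))) / 4 := by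
        rw [hTT]; ring
      rw [e, ← hZZ, Finset.mul_sum, Finset.sum_div, Finset.mul_sum, ← Finset.sum_sub_distrib]
      refine Finset.sum_congr rfl fun k _ => ?_
      rw [Finset.mul_sum, Finset.sum_div, Finset.mul_sum, ← Finset.sum_sub_distrib]
      refine Finset.sum_congr rfl fun l _ => ?_
      ring
    rw [this, hd]
    exact Finset.sum_le_sum fun k _ => Finset.sum_le_sum fun l _ => mul_le_mul_of_nonneg_left (hS _ _) (hw0 k l)

lemma duh_one (X A : Matrix n n ℂ) : duh X A 1 = (trace (NormedSpace.exp X * A)).re := by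
  unfold duh
  have : ∀ s : ℝ, (trace (NormedSpace.exp (s • X) * A * NormedSpace.exp ((1 - s) • X) * 1)).re
      = (trace (NormedSpace.exp X * A)).re := by
    intro s
    rw [mul_one, trace_mul_comm, ← mul_assoc, ← Matrix.exp_add_of_commute, ← add_smul]
    · simp
    · exact ((Commute.refl X).smul_left _).smul_right _
  simp only [this]; simp

lemma cont_tr {E : Type*} [TopologicalSpace E] (X : E → Matrix n n ℂ) (hX : Continuous X) (A : Matrix n n ℂ) :
    Continuous (fun e => (trace (NormedSpace.exp (X e) * A)).re) :=
  Complex.continuous_re.comp (Continuous.matrix_trace ((mexp_continuous.comp hX).mul continuous_const))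

lemma gibbs_line_deriv [Nonempty n] (X A : Matrix n n ℂ) (hX : ∀ t : ℝ, (X + t • A).IsHermitian) (t : ℝ) :
    HasDerivAt (fun t : ℝ => (trace (NormedSpace.exp (X + t • A) * A)).re / (trace (NormedSpace.exp (X + t • A))).re)
      (duh (X + t • A) A A / (trace (NormedSpace.exp (X + t • A))).re
        - ((trace (NormedSpace.exp (X + t • A) * A)).re / (trace (NormedSpace.exp (X + t • A))).re) ^ 2) t := by
  have h1 := tr_hasDerivAt X A A t
  have h2 := tr_hasDerivAt X A 1 t
  rw [duh_one] at h2
  simp only [mul_one] at h2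
  have hp := (trexp_pos _ (hX t)).1
  have := h1.div h2 hp.ne'
  convert! this using 1
  field_simp
end gib

open Matrix MeasureTheory ProbabilityTheory

lemma SzProd_herm (N : ℕ) (s : Finset (Fin N)) : (SzProd N s).IsHermitian := by
  unfold SzProd
  rw [Matrix.isHermitian_diagonal_iff]
  intro σ
  rw [isSelfAdjoint_iff, star_prod]
  refine Finset.prod_congr rfl fun j _ => ?_
  split_ifs <;> simp

lemma SzProd_sq (N : ℕ) (s : Finset (Fin N)) : SzProd N s * SzProd N s = 1 := by
  unfold SzProd
  rw [diagonal_mul_diagonal, ← diagonal_one]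
  congr 1
  ext σ
  rw [← Finset.prod_mul_distrib]
  refine Finset.prod_eq_one fun j _ => ?_
  split_ifs <;> simp

lemma fin2_flip (x : Fin 2) : 1 - (1 - x) = x := by omega

lemma flip_iff {N : ℕ} (j : Fin N) (σ τ : Conf N) :
    τ = Function.update σ j (1 - σ j) ↔ σ = Function.update τ j (1 - τ j) := by
  constructor <;> (intro h; subst h; simp)

lemma Sx_herm (N : ℕ) (j : Fin N) : (Sx N j).IsHermitian := by
  ext σ τ
  simp only [Sx, conjTranspose_apply, of_apply]
  simp only [flip_iff j τ σ]
  split_ifs <;> simp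

lemma Sx_sq (N : ℕ) (j : Fin N) : Sx N j * Sx N j = 1 := by
  ext σ τ
  rw [Matrix.mul_apply]
  simp only [Sx, of_apply]
  rw [Finset.sum_eq_single (Function.update σ j (1 - σ j))]
  · simp only [if_true, one_mul, Function.update_self, Function.update_idem, fin2_flip,
      Function.update_eq_self, Matrix.one_apply, eq_comm]
  · intro b _ hb; simp [hb]
  · simp

lemma UNp_herm (N p : ℕ) (g : Finset (Fin N) → ℝ) : (UNp N p g).IsHermitian := by
  unfold UNp
  apply herm_smul
  unfold Matrix.IsHermitian
  rw [conjTranspose_sum]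
  refine Finset.sum_congr rfl fun s _ => ?_
  split_ifs
  · exact herm_smul _ (SzProd_herm N s)
  · simp

lemma HNp_herm (N p : ℕ) (J b : ℝ) (g : Finset (Fin N) → ℝ) : (HNp N p J b g).IsHermitian := by
  unfold HNp
  apply Matrix.IsHermitian.sub (herm_smul _ (UNp_herm N p g))
  apply herm_smul
  unfold Matrix.IsHermitian
  rw [conjTranspose_sum]
  exact Finset.sum_congr rfl fun j _ => Sx_herm N j

lemma HNp_cont (N p : ℕ) (J b : ℝ) : Continuous (HNp N p J b) := by
  unfold HNp UNp
  have h : Continuous fun g : Finset (Fin N) → ℝ =>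
      ∑ s : Finset (Fin N), if s.card = p then g s • SzProd N s else 0 := by
    refine continuous_finsetSum _ fun s _ => ?_
    split_ifs
    · exact (continuous_apply s).smul continuous_const
    · exact continuous_const
  fun_prop

lemma gibbs_cont (N p : ℕ) (β J b : ℝ) (A : Matrix (Conf N) (Conf N) ℂ) :
    Continuous (fun g => gibbs β (HNp N p J b g) A) := by
  simp only [gibbs_eq _ _ _ (HNp_herm N p J b _)]
  have hc : Continuous fun g => (-β) • HNp N p J b g := by
    have := HNp_cont N p J b
    fun_prop
  refine Continuous.div (cont_tr _ hc A) ?_ (fun g => (trexp_pos _ (herm_smul _ (HNp_herm N p J b g))).1.ne')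
  have := cont_tr _ hc 1
  simpa only [mul_one] using this

lemma SzProd_flip (N : ℕ) (s : Finset (Fin N)) (j : Fin N) :
    SzProd N s * Sx N j * SzProd N s = if j ∈ s then - Sx N j else Sx N j := by
  have hz : ∀ (σ : Conf N), (∏ i ∈ s, (if Function.update σ j (1 - σ j) i = 0 then (1 : ℂ) else -1))
      = (if j ∈ s then -1 else 1) * ∏ i ∈ s, (if σ i = 0 then (1 : ℂ) else -1) := by
    intro σ
    by_cases hj : j ∈ s
    · rw [if_pos hj, ← Finset.mul_prod_erase _ _ hj, ← Finset.mul_prod_erase _ _ hj, ← mul_assoc]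
      congr 1
      · have : ∀ x : Fin 2, (if 1 - x = 0 then (1:ℂ) else -1) = -1 * if x = 0 then 1 else -1 := by
          intro x; fin_cases x <;> simp
        simpa using this (σ j)
      · refine Finset.prod_congr rfl fun i hi => ?_
        rw [Function.update_of_ne (Finset.ne_of_mem_erase hi)]
    · rw [if_neg hj, one_mul]
      refine Finset.prod_congr rfl fun i hi => ?_
      rw [Function.update_of_ne (by rintro rfl; exact hj hi)]
  have hsq : ∀ (σ : Conf N), (∏ i ∈ s, (if σ i = 0 then (1 : ℂ) else -1)) * ∏ i ∈ s, (if σ i = 0 then (1 : ℂ) else -1) = 1 := by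
    intro σ
    rw [← Finset.prod_mul_distrib]
    refine Finset.prod_eq_one fun j _ => ?_
    split_ifs <;> simp
  ext σ τ
  unfold SzProd
  rw [Matrix.mul_diagonal, Matrix.diagonal_mul]
  by_cases h : τ = Function.update σ j (1 - σ j)
  · have e : Sx N j σ τ = 1 := by simp [Sx, h]
    rw [e, mul_one, h, hz, mul_left_comm, hsq, mul_one, ← h]
    split_ifs <;> simp [e]
  · have e : Sx N j σ τ = 0 := by simp [Sx, h]
    rw [e]
    split_ifs <;> simp [e]

lemma SzProd_comm (N : ℕ) (s t : Finset (Fin N)) : SzProd N s * SzProd N t = SzProd N t * SzProd N s := by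
  unfold SzProd
  rw [diagonal_mul_diagonal, diagonal_mul_diagonal]
  congr 1; ext; ring

lemma comm_main (N p : ℕ) (β J b : ℝ) (g : Finset (Fin N) → ℝ) (s : Finset (Fin N)) :
    (-β) • HNp N p J b g - SzProd N s * ((-β) • HNp N p J b g) * SzProd N s
      = (2 * (β * b)) • ∑ j ∈ s, Sx N j := by
  have hU : SzProd N s * UNp N p g * SzProd N s = UNp N p g := by
    have : SzProd N s * UNp N p g = UNp N p g * SzProd N s := by
      unfold UNp
      rw [Matrix.mul_smul, Matrix.smul_mul, Matrix.mul_sum, Matrix.sum_mul]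
      congr 1
      refine Finset.sum_congr rfl fun t _ => ?_
      split_ifs
      · rw [Matrix.mul_smul, Matrix.smul_mul, SzProd_comm]
      · simp
    rw [this, mul_assoc, SzProd_sq, mul_one]
  have hS : SzProd N s * (∑ j, Sx N j) * SzProd N s = ∑ j, Sx N j - (2:ℝ) • ∑ j ∈ s, Sx N j := by
    rw [Matrix.mul_sum, Matrix.sum_mul]
    simp only [SzProd_flip]
    rw [← Finset.sum_filter_add_sum_filter_not Finset.univ (fun j => j ∈ s) (fun j => Sx N j)]
    rw [← Finset.sum_filter_add_sum_filter_not Finset.univ (fun j => j ∈ s)]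
    rw [Finset.sum_congr rfl (g := fun j => - Sx N j) (fun j hj => if_pos (Finset.mem_filter.1 hj).2)]
    rw [Finset.sum_congr (s₁ := Finset.filter (fun j => j ∉ s) _) rfl (g := fun j => Sx N j) (fun j hj => if_neg (Finset.mem_filter.1 hj).2)]
    simp only [Finset.filter_univ_mem]
    rw [Finset.sum_neg_distrib]
    module
  have : SzProd N s * ((-β) • HNp N p J b g) * SzProd N s
      = (-β) • (J • (SzProd N s * UNp N p g * SzProd N s) - b • (SzProd N s * (∑ j, Sx N j) * SzProd N s)) := by
    unfold HNp
    simp only [Matrix.mul_smul, Matrix.smul_mul, Matrix.mul_sub, Matrix.sub_mul]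
  rw [this, hU, hS]
  unfold HNp
  module

def kap (N p : ℕ) (β J : ℝ) : ℝ := β * J * Real.sqrt ((Nat.factorial p : ℝ) / (2 * (N : ℝ) ^ (p - 1)))

lemma HNp_update (N p : ℕ) (β J b : ℝ) (g : Finset (Fin N) → ℝ) (s : Finset (Fin N)) (hs : s.card = p) (y : ℝ) :
    (-β) • HNp N p J b (Function.update g s y)
      = (-β) • HNp N p J b (Function.update g s 0) + (kap N p β J * y) • SzProd N s := by
  have hU : ∀ y : ℝ, (∑ t : Finset (Fin N), if t.card = p then (Function.update g s y) t • SzProd N t else 0)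
      = y • SzProd N s + ∑ t ∈ Finset.univ.erase s, if t.card = p then g t • SzProd N t else 0 := by
    intro y
    rw [← Finset.add_sum_erase _ _ (Finset.mem_univ s)]
    congr 1
    · rw [if_pos hs, Function.update_self]
    · refine Finset.sum_congr rfl fun t ht => ?_
      rw [Function.update_of_ne (Finset.ne_of_mem_erase ht)]
  unfold HNp UNp kap
  rw [hU, hU]
  module

/-- Derivative along a coordinate. -/
lemma gibbs_coord (N p : ℕ) (β J b : ℝ) (g : Finset (Fin N) → ℝ) (s : Finset (Fin N)) (hs : s.card = p) :
    ∃ f' : ℝ → ℝ, (∀ y, HasDerivAt (fun y => gibbs β (HNp N p J b (Function.update g s y)) (SzProd N s)) (f' y) y) ∧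
      (∀ y, |f' y| ≤ |kap N p β J|) ∧
      (0 ≤ kap N p β J → ∀ C m, Supp C m → ∀ y, kap N p β J * (C - m * (β * b * ∑ j ∈ s, gibbs β (HNp N p J b (Function.update g s y)) (Sx N j))
        - gibbs β (HNp N p J b (Function.update g s y)) (SzProd N s) ^ 2) ≤ f' y) := by
  set X := (-β) • HNp N p J b (Function.update g s 0) with hX
  set A := SzProd N s with hA
  set κ := kap N p β J with hκ
  have hXt : ∀ t : ℝ, (X + t • A).IsHermitian := fun t =>
    (herm_smul _ (HNp_herm N p J b _)).add (herm_smul _ (SzProd_herm N s))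
  have hup : ∀ y, (-β) • HNp N p J b (Function.update g s y) = X + (κ * y) • A := fun y =>
    HNp_update N p β J b g s hs y
  have hgb : ∀ y M, gibbs β (HNp N p J b (Function.update g s y)) M =
      (trace (NormedSpace.exp (X + (κ * y) • A) * M)).re / (trace (NormedSpace.exp (X + (κ * y) • A))).re := by
    intro y M
    rw [gibbs_eq _ _ _ (HNp_herm N p J b _), hup]
  refine ⟨fun y => κ * (duh (X + (κ * y) • A) A A / (trace (NormedSpace.exp (X + (κ * y) • A))).re
        - gibbs β (HNp N p J b (Function.update g s y)) A ^ 2), ?_, ?_, ?_⟩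
  · intro y
    simp only [hgb]
    have h1 := gibbs_line_deriv X A hXt (κ * y)
    have h2 : HasDerivAt (fun y : ℝ => κ * y) κ y := by simpa using (hasDerivAt_id y).const_mul κ
    have := HasDerivAt.comp (h := fun y : ℝ => κ * y) y h1 h2
    rw [mul_comm] at this
    exact this
  · intro y
    have h1 := duh_bounds (X + (κ * y) • A) A (hXt _) (SzProd_herm N s) (SzProd_sq N s)
    have h2 := (trexp_pos _ (hXt (κ * y))).1
    have h3 := gibbs_abs_le β (HNp N p J b (Function.update g s y)) A (HNp_herm _ _ _ _ _) (SzProd_herm N s) (SzProd_sq N s)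
    rw [abs_mul]
    refine mul_le_of_le_one_right (abs_nonneg _) ?_
    have h4 : 0 ≤ duh (X + (κ * y) • A) A A / (trace (NormedSpace.exp (X + (κ * y) • A))).re := div_nonneg h1.1 h2.le
    have h5 : duh (X + (κ * y) • A) A A / (trace (NormedSpace.exp (X + (κ * y) • A))).re ≤ 1 := (div_le_one h2).2 h1.2.1
    have h6 := (sq_le_one_iff_abs_le_one _).2 h3
    have h7 := sq_nonneg (gibbs β (HNp N p J b (Function.update g s y)) A)
    rw [abs_le]; constructor <;> linarith
  · intro hk C m hS y
    refine mul_le_mul_of_nonneg_left (sub_le_sub_right ?_ _) hk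
    have h1 := (duh_bounds (X + (κ * y) • A) A (hXt _) (SzProd_herm N s) (SzProd_sq N s)).2.2.2 C m hS
    have h2 := (trexp_pos _ (hXt (κ * y))).1
    rw [le_div_iff₀ h2]
    refine le_trans (le_of_eq ?_) h1
    simp only [hgb]
    have h3 := comm_main N p β J b (Function.update g s y) s
    rw [hup] at h3
    rw [h3, ← Finset.sum_div]
    rw [Matrix.mul_smul, Matrix.trace_smul, Complex.smul_re, Matrix.mul_sum, trace_sum, Complex.re_sum, smul_eq_mul]
    field_simp

lemma sx_nonneg (N p : ℕ) (β J b : ℝ) (g : Finset (Fin N) → ℝ) (s : Finset (Fin N)) :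
    0 ≤ β * b * ∑ j ∈ s, gibbs β (HNp N p J b g) (Sx N j) := by
  have hH := herm_smul (-β) (HNp_herm N p J b g)
  have h1 := (duh_bounds _ (SzProd N s) hH (SzProd_herm N s) (SzProd_sq N s)).2.2.1
  have h2 := (trexp_pos _ hH).1
  rw [comm_main, Matrix.mul_smul, Matrix.trace_smul, Complex.smul_re, Matrix.mul_sum, trace_sum, Complex.re_sum, smul_eq_mul] at h1
  simp only [gibbs_eq _ _ _ (HNp_herm N p J b _)]
  rw [← Finset.sum_div, ← mul_div_assoc]
  exact div_nonneg (by linarith) h2.le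

lemma mexp_submatrix {n : Type*} [Fintype n] [DecidableEq n] (e : n ≃ n) (M : Matrix n n ℂ) :
    NormedSpace.exp (M.submatrix e e) = (NormedSpace.exp M).submatrix e e := by
  let _ : NormedRing (Matrix n n ℂ) := Matrix.linftyOpNormedRing
  let _ : NormedAlgebra ℝ (Matrix n n ℂ) := Matrix.linftyOpNormedAlgebra
  let _ : NormedAlgebra ℚ (Matrix n n ℂ) := NormedAlgebra.restrictScalars ℚ ℝ _
  have hc : Continuous (Matrix.reindexAlgEquiv ℂ ℂ e.symm) := by
    show Continuous (fun M : Matrix n n ℂ => M.submatrix e e)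
    exact continuous_id.matrix_submatrix _ _
  exact (NormedSpace.map_exp (Matrix.reindexAlgEquiv ℂ ℂ e.symm) hc M).symm

lemma gibbs_submatrix {n : Type*} [Fintype n] [DecidableEq n] (e : n ≃ n) (β : ℝ) (H A : Matrix n n ℂ) :
    gibbs β (H.submatrix e e) (A.submatrix e e) = gibbs β H A := by
  have htr : ∀ M : Matrix n n ℂ, trace (M.submatrix e e) = trace M := by
    intro M
    simp only [trace, diag_apply, submatrix_apply]
    exact Equiv.sum_comp e (fun i => M i i)
  unfold gibbs
  have : (-β) • H.submatrix e e = ((-β) • H).submatrix e e := rfl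
  rw [this, mexp_submatrix, Matrix.submatrix_mul_equiv, htr, htr]

def confE {N : ℕ} (π : Equiv.Perm (Fin N)) : Conf N ≃ Conf N := π.arrowCongr (Equiv.refl _) |>.symm

lemma confE_apply {N : ℕ} (π : Equiv.Perm (Fin N)) (σ : Conf N) (j : Fin N) : confE π σ j = σ (π j) := rfl

lemma SzProd_perm {N : ℕ} (π : Equiv.Perm (Fin N)) (s : Finset (Fin N)) :
    (SzProd N s).submatrix (confE π) (confE π) = SzProd N (s.map π.toEmbedding) := by
  unfold SzProd
  rw [Matrix.submatrix_diagonal_equiv]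
  congr 1
  ext σ
  rw [Finset.prod_map]
  rfl

lemma Sx_perm {N : ℕ} (π : Equiv.Perm (Fin N)) (j : Fin N) :
    (Sx N j).submatrix (confE π) (confE π) = Sx N (π j) := by
  ext σ τ
  simp only [Sx, submatrix_apply, of_apply]
  have : confE π τ = Function.update (confE π σ) j (1 - confE π σ j) ↔ τ = Function.update σ (π j) (1 - σ (π j)) := by
    rw [← (confE π).injective.eq_iff (a := τ)]
    have : confE π (Function.update σ (π j) (1 - σ (π j))) = Function.update (confE π σ) j (1 - confE π σ j) := by
      funext i
      rw [confE_apply, Function.update_apply, Function.update_apply]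
      simp [confE_apply]
    rw [this]
  simp only [this]

lemma UNp_perm {N : ℕ} (p : ℕ) (π : Equiv.Perm (Fin N)) (g : Finset (Fin N) → ℝ) :
    (UNp N p g).submatrix (confE π) (confE π) = UNp N p (fun s => g (s.map π.symm.toEmbedding)) := by
  unfold UNp
  rw [Matrix.submatrix_smul]
  simp only [Pi.smul_apply]
  congr 1
  have h1 : (∑ s : Finset (Fin N), if s.card = p then g s • SzProd N s else 0).submatrix (confE π) (confE π)
      = ∑ s : Finset (Fin N), (if s.card = p then g s • SzProd N s else 0).submatrix (confE π) (confE π) := by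
    ext σ τ
    simp [Matrix.sum_apply]
  rw [h1]
  rw [← Equiv.sum_comp π.finsetCongr (fun s : Finset (Fin N) =>
    if s.card = p then g (s.map π.symm.toEmbedding) • SzProd N s else 0)]
  refine Finset.sum_congr rfl fun s _ => ?_
  have h2 : (s.map π.toEmbedding).map π.symm.toEmbedding = s := by
    rw [Finset.map_map]; ext; simp
  simp only [Equiv.finsetCongr_apply, Finset.card_map, h2]
  split_ifs
  · rw [← SzProd_perm]; rfl
  · rfl

lemma HNp_perm {N : ℕ} (p : ℕ) (J b : ℝ) (π : Equiv.Perm (Fin N)) (g : Finset (Fin N) → ℝ) :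
    (HNp N p J b g).submatrix (confE π) (confE π) = HNp N p J b (fun s => g (s.map π.symm.toEmbedding)) := by
  have h1 : (∑ j, Sx N j).submatrix (confE π) (confE π) = ∑ j, Sx N j := by
    conv_rhs => rw [← Equiv.sum_comp π (fun j => Sx N j)]
    rw [show (∑ j, Sx N (π j)) = ∑ j, (Sx N j).submatrix (confE π) (confE π) from
      Finset.sum_congr rfl fun j _ => (Sx_perm π j).symm]
    ext σ τ
    simp [Matrix.sum_apply]
  unfold HNp
  rw [← UNp_perm]
  nth_rewrite 2 [← h1]
  rfl

open Matrix MeasureTheory ProbabilityTheory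

lemma stein (f f' : ℝ → ℝ) (K : ℝ) (hd : ∀ y, HasDerivAt f (f' y) y) (hf : ∀ y, |f y| ≤ K)
    (hf' : ∀ y, |f' y| ≤ K) :
    ∫ y, y * f y ∂(gaussianReal 0 1) = ∫ y, f' y ∂(gaussianReal 0 1) ∧ Integrable f' (gaussianReal 0 1) := by
  have hcont : Continuous f := continuous_iff_continuousAt.2 fun y => (hd y).continuousAt
  have hm' : Measurable f' := by
    have : f' = deriv f := by ext y; exact (hd y).deriv.symm
    rw [this]; exact measurable_deriv f
  refine ⟨?_, ?_⟩
  swap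
  · exact Integrable.of_bound hm'.aestronglyMeasurable K (Filter.Eventually.of_forall fun y => by
      rw [Real.norm_eq_abs]; exact hf' y)
  rw [integral_gaussianReal_eq_integral_smul one_ne_zero, integral_gaussianReal_eq_integral_smul one_ne_zero]
  set φ := gaussianPDFReal 0 1 with hφ
  have hφe : ∀ x, φ x = (√(2 * Real.pi))⁻¹ * Real.exp (-(1/2) * x ^ 2) := by
    intro x
    rw [hφ, gaussianPDFReal]
    simp only [NNReal.coe_one, sub_zero, mul_one]
    congr 2
    ring
  have hφd : ∀ x, HasDerivAt φ (-x * φ x) x := by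
    intro x
    have h1 : HasDerivAt (fun x : ℝ => -(1/2) * x ^ 2) (-x) x := by
      have := (hasDerivAt_pow 2 x).const_mul (-(1/2) : ℝ)
      convert! this using 1
      simp
    have h2 := h1.exp.const_mul (√(2 * Real.pi))⁻¹
    have e : φ = fun x => (√(2 * Real.pi))⁻¹ * Real.exp (-(1/2) * x ^ 2) := funext hφe
    rw [e]
    convert! h2 using 1
    ring
  have hφi : Integrable φ := integrable_gaussianPDFReal 0 1
  have hxφ : Integrable (fun x => x * φ x) := by
    have := (integrable_mul_exp_neg_mul_sq (b := 1/2) (by norm_num)).const_mul (√(2 * Real.pi))⁻¹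
    refine this.congr (Filter.Eventually.of_forall fun x => ?_)
    simp only [hφe]; ring
  have i1 : Integrable (fun x => φ x * f x) := by
    refine hφi.mul_bdd (c := K) hcont.aestronglyMeasurable (Filter.Eventually.of_forall fun y => by
      rw [Real.norm_eq_abs]; exact hf y)
  have i2 : Integrable (fun x => φ x * f' x) := by
    refine hφi.mul_bdd (c := K) hm'.aestronglyMeasurable (Filter.Eventually.of_forall fun y => by
      rw [Real.norm_eq_abs]; exact hf' y)
  have i3 : Integrable (fun x => x * φ x * f x) := by
    refine hxφ.mul_bdd (c := K) hcont.aestronglyMeasurable (Filter.Eventually.of_forall fun y => by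
      rw [Real.norm_eq_abs]; exact hf y)
  have h0 := integral_eq_zero_of_hasDerivAt_of_integrable (f := fun x => φ x * f x)
    (f' := fun x => φ x * f' x - x * φ x * f x) (fun x => by
      have := (hφd x).mul (hd x)
      convert! this using 1
      ring) (i2.sub i3) i1
  rw [integral_sub i2 i3] at h0
  simp only [smul_eq_mul]
  have e : ∫ x, φ x * (x * f x) = ∫ x, x * φ x * f x := by congr 1; ext x; ring
  rw [e]; linarith

lemma update_mp {T : Type*} [Fintype T] [DecidableEq T] (ν : Measure ℝ) [IsProbabilityMeasure ν] (t : T) :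
    MeasurePreserving (fun q : (T → ℝ) × ℝ => Function.update q.1 t q.2)
      ((Measure.pi fun _ : T => ν).prod ν) (Measure.pi fun _ : T => ν) := by
  have hm : Measurable (fun q : (T → ℝ) × ℝ => Function.update q.1 t q.2) := by
    rw [measurable_pi_iff]
    intro i
    by_cases h : i = t
    · subst h; simp only [Function.update_self]; exact measurable_snd
    · simp only [Function.update_of_ne h]; exact (measurable_pi_apply i).comp measurable_fst
  refine ⟨hm, ?_⟩
  refine (Measure.pi_eq fun s hs => ?_).symm
  rw [Measure.map_apply hm (MeasurableSet.univ_pi hs)]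
  have : (fun q : (T → ℝ) × ℝ => Function.update q.1 t q.2) ⁻¹' (Set.univ.pi s)
      = (Set.univ.pi (Function.update s t Set.univ)) ×ˢ (s t) := by
    ext ⟨x, y⟩
    simp only [Set.mem_preimage, Set.mem_pi, Set.mem_univ, true_implies, Set.mem_prod]
    constructor
    · intro h
      refine ⟨fun i => ?_, by simpa using h t⟩
      by_cases hi : i = t
      · subst hi; simp
      · simpa [hi] using h i
    · rintro ⟨h1, h2⟩ i
      by_cases hi : i = t
      · subst hi; simpa using h2
      · simpa [hi] using h1 i
  rw [this, Measure.prod_prod, Measure.pi_pi, ← Finset.mul_prod_erase _ _ (Finset.mem_univ t),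
    ← Finset.mul_prod_erase Finset.univ (fun i => ν (s i)) (Finset.mem_univ t)]
  simp only [Function.update_self, measure_univ, one_mul]
  rw [mul_comm]
  congr 1
  refine Finset.prod_congr rfl fun i hi => ?_
  rw [Function.update_of_ne (Finset.ne_of_mem_erase hi)]

abbrev TT (N p : ℕ) := {t : Finset (Fin N) // t.card = p}

def ext' {N p : ℕ} (x : TT N p → ℝ) : Finset (Fin N) → ℝ := fun s => if h : s.card = p then x ⟨s, h⟩ else 0

def PP (N p : ℕ) : Measure (TT N p → ℝ) := Measure.pi fun _ => gaussianReal 0 1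

instance (N p : ℕ) : IsProbabilityMeasure (PP N p) := by unfold PP; infer_instance

lemma ext'_update {N p : ℕ} (x : TT N p → ℝ) (t : TT N p) (y : ℝ) :
    ext' (Function.update x t y) = Function.update (ext' x) t.1 y := by
  funext s
  by_cases hs : s.card = p
  · by_cases h : s = t.1
    · subst h; simp [ext', t.2]
    · rw [Function.update_of_ne h]
      simp only [ext', hs, dif_pos]
      rw [Function.update_of_ne]
      intro h'; exact h (congrArg Subtype.val h')
  · have h : s ≠ t.1 := fun h => hs (h ▸ t.2)
    rw [Function.update_of_ne h]
    simp [ext', hs]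

lemma ext'_cont {N p : ℕ} : Continuous (ext' : (TT N p → ℝ) → _) := by
  refine continuous_pi fun s => ?_
  unfold ext'
  by_cases h : s.card = p
  · simp only [h, dif_pos]; fun_prop
  · simp only [h]; exact continuous_const

/-- Gibbs expectation as a function of the couplings. -/
def GG (N p : ℕ) (β J b : ℝ) (A : Matrix (Conf N) (Conf N) ℂ) (x : TT N p → ℝ) : ℝ :=
  gibbs β (HNp N p J b (ext' x)) A

lemma GG_cont (N p : ℕ) (β J b : ℝ) (A : Matrix (Conf N) (Conf N) ℂ) : Continuous (GG N p β J b A) :=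
  (gibbs_cont N p β J b A).comp ext'_cont

lemma GG_int (N p : ℕ) (β J b : ℝ) (A : Matrix (Conf N) (Conf N) ℂ) (hA : A.IsHermitian) (h2 : A * A = 1) :
    Integrable (GG N p β J b A) (PP N p) :=
  Integrable.of_bound (GG_cont N p β J b A).aestronglyMeasurable 1 (Filter.Eventually.of_forall fun x => by
    rw [Real.norm_eq_abs]; exact gibbs_abs_le _ _ _ (HNp_herm _ _ _ _ _) hA h2)

lemma GG_sq_int (N p : ℕ) (β J b : ℝ) (A : Matrix (Conf N) (Conf N) ℂ) (hA : A.IsHermitian) (h2 : A * A = 1) :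
    Integrable (fun x => GG N p β J b A x ^ 2) (PP N p) :=
  Integrable.of_bound ((GG_cont N p β J b A).pow 2).aestronglyMeasurable 1 (Filter.Eventually.of_forall fun x => by
    rw [Real.norm_eq_abs, abs_pow]
    exact pow_le_one₀ (abs_nonneg _) (gibbs_abs_le _ _ _ (HNp_herm _ _ _ _ _) hA h2))

lemma coord_mul_int (N p : ℕ) (β J b : ℝ) (t : TT N p) :
    Integrable (fun x => x t * GG N p β J b (SzProd N t.1) x) (PP N p) := by
  have h1 : Integrable (fun x : TT N p → ℝ => x t) (PP N p) := by
    have hid : Integrable (fun y : ℝ => y) (gaussianReal 0 1) := by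
      have := (memLp_id_gaussianReal (μ := 0) (v := 1) 1).integrable le_rfl
      exact this
    exact (measurePreserving_eval (fun _ : TT N p => gaussianReal 0 1) t).integrable_comp_of_integrable hid
  exact h1.mul_bdd (c := 1) (GG_cont N p β J b _).aestronglyMeasurable (Filter.Eventually.of_forall fun x => by
    rw [Real.norm_eq_abs]; exact gibbs_abs_le _ _ _ (HNp_herm _ _ _ _ _) (SzProd_herm _ _) (SzProd_sq _ _))

lemma ibp (N p : ℕ) (β J b : ℝ) (hk : 0 ≤ kap N p β J) (t : TT N p) (C m : ℝ) (hS : Supp C m) :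
    kap N p β J * (C - m * (β * b * ∑ j ∈ t.1, ∫ x, GG N p β J b (Sx N j) x ∂(PP N p))
      - ∫ x, GG N p β J b (SzProd N t.1) x ^ 2 ∂(PP N p))
    ≤ ∫ x, x t * GG N p β J b (SzProd N t.1) x ∂(PP N p) := by
  let L : (TT N p → ℝ) → ℝ := fun x => kap N p β J * (C - m * (β * b * ∑ j ∈ t.1, GG N p β J b (Sx N j) x)
      - GG N p β J b (SzProd N t.1) x ^ 2)
  have iS : Integrable (fun x => ∑ j ∈ t.1, GG N p β J b (Sx N j) x) (PP N p) :=
    integrable_finsetSum _ fun j _ => GG_int N p β J b _ (Sx_herm N j) (Sx_sq N j)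
  have i2 := GG_sq_int N p β J b _ (SzProd_herm N t.1) (SzProd_sq N t.1)
  have i1 : Integrable (fun x => C - m * (β * b * ∑ j ∈ t.1, GG N p β J b (Sx N j) x)) (PP N p) :=
    (integrable_const C).sub ((iS.const_mul _).const_mul _)
  have iL : Integrable L (PP N p) := (i1.sub i2).const_mul _
  have hL : ∫ x, L x ∂(PP N p) = kap N p β J * (C - m * (β * b * ∑ j ∈ t.1, ∫ x, GG N p β J b (Sx N j) x ∂(PP N p))
      - ∫ x, GG N p β J b (SzProd N t.1) x ^ 2 ∂(PP N p)) := by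
    simp only [L]
    rw [integral_const_mul, integral_sub i1 i2, integral_sub (integrable_const C) ((iS.const_mul _).const_mul _),
      integral_const_mul, integral_const_mul, integral_finsetSum _ fun j _ => GG_int N p β J b _ (Sx_herm N j) (Sx_sq N j)]
    simp
  rw [← hL]
  have hmp : MeasurePreserving (fun q : (TT N p → ℝ) × ℝ => Function.update q.1 t q.2)
      ((PP N p).prod (gaussianReal 0 1)) (PP N p) := update_mp (T := TT N p) (gaussianReal 0 1) t
  have key : ∀ F : (TT N p → ℝ) → ℝ, Integrable F (PP N p) →
      Integrable (fun x => ∫ y, F (Function.update x t y) ∂(gaussianReal 0 1)) (PP N p) ∧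
      ∫ x, F x ∂(PP N p) = ∫ x, ∫ y, F (Function.update x t y) ∂(gaussianReal 0 1) ∂(PP N p) ∧
      ∀ᵐ x ∂(PP N p), Integrable (fun y => F (Function.update x t y)) (gaussianReal 0 1) := by
    intro F hF
    have h1 : Integrable (fun q : (TT N p → ℝ) × ℝ => F (Function.update q.1 t q.2)) ((PP N p).prod (gaussianReal 0 1)) :=
      hmp.integrable_comp_of_integrable hF
    refine ⟨h1.integral_prod_left, ?_, h1.prod_right_ae⟩
    rw [← integral_prod _ h1]
    have h2 : AEStronglyMeasurable F (Measure.map (fun q : (TT N p → ℝ) × ℝ => Function.update q.1 t q.2) ((PP N p).prod (gaussianReal 0 1))) := by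
      have := hF.aestronglyMeasurable
      rw [← hmp.map_eq] at this
      exact this
    have h3 := integral_map hmp.aemeasurable h2
    rw [hmp.map_eq] at h3
    exact h3
  obtain ⟨a1, a2, a3⟩ := key L iL
  obtain ⟨b1, b2, b3⟩ := key _ (coord_mul_int N p β J b t)
  rw [a2, b2]
  refine integral_mono_ae a1 b1 ?_
  filter_upwards [a3] with x hx
  obtain ⟨f', hd, hb, hlow⟩ := gibbs_coord N p β J b (ext' x) t.1 t.2
  have hst := stein _ f' (1 + |kap N p β J|) hd (fun y => by
    have := gibbs_abs_le β (HNp N p J b (Function.update (ext' x) t.1 y)) _ (HNp_herm _ _ _ _ _) (SzProd_herm N t.1) (SzProd_sq N t.1)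
    have := abs_nonneg (kap N p β J)
    linarith) (fun y => by linarith [hb y])
  simp only [Function.update_self]
  have e : ∀ y A, GG N p β J b A (Function.update x t y) = gibbs β (HNp N p J b (Function.update (ext' x) t.1 y)) A := by
    intro y A
    unfold GG; rw [ext'_update]
  simp only [e]
  rw [hst.1]
  refine integral_mono hx hst.2 fun y => ?_
  simp only [L, e]
  exact hlow hk C m hS y

lemma PP_perm {N p : ℕ} (ρ : TT N p ≃ TT N p) (F : (TT N p → ℝ) → ℝ) :
    ∫ x, F (fun t => x (ρ t)) ∂(PP N p) = ∫ x, F x ∂(PP N p) := by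
  have h := measurePreserving_piCongrLeft (α := fun _ : TT N p => ℝ) (fun _ => gaussianReal 0 1) ρ.symm
  have := h.integral_comp (MeasurableEquiv.measurableEmbedding _) F
  rw [PP, ← this]
  congr 1
  ext x
  congr 1
  funext t
  have h := Equiv.piCongrLeft_apply_apply (fun _ : TT N p => ℝ) ρ.symm x (ρ t)
  rw [Equiv.symm_apply_apply] at h
  exact h.symm

def rho {N p : ℕ} (π : Equiv.Perm (Fin N)) : TT N p ≃ TT N p where
  toFun t := ⟨t.1.map π.symm.toEmbedding, by simp [t.2]⟩
  invFun t := ⟨t.1.map π.toEmbedding, by simp [t.2]⟩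
  left_inv t := by ext; simp
  right_inv t := by ext; simp

lemma GG_perm {N p : ℕ} (β J b : ℝ) (π : Equiv.Perm (Fin N)) (A : Matrix (Conf N) (Conf N) ℂ) (x : TT N p → ℝ) :
    GG N p β J b (A.submatrix (confE π) (confE π)) (fun t => x (rho π t)) = GG N p β J b A x := by
  unfold GG
  rw [← gibbs_submatrix (confE π) β (HNp N p J b (ext' x)) A, HNp_perm]
  congr 2
  funext s
  simp only [ext', rho, Finset.card_map]
  rfl

lemma sq_perm {N p : ℕ} (β J b : ℝ) (s t : TT N p) :
    ∫ x, GG N p β J b (SzProd N t.1) x ^ 2 ∂(PP N p) = ∫ x, GG N p β J b (SzProd N s.1) x ^ 2 ∂(PP N p) := by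
  obtain ⟨π, hπ⟩ : ∃ π : Equiv.Perm (Fin N), s.1.map π.toEmbedding = t.1 := by
    let e : {x // x ∈ s.1} ≃ {x // x ∈ t.1} := Finset.equivOfCardEq (s.2.trans t.2.symm)
    refine ⟨e.extendSubtype, ?_⟩
    apply Finset.eq_of_subset_of_card_le
    · intro i hi
      rw [Finset.mem_map] at hi
      obtain ⟨j, hj, rfl⟩ := hi
      exact e.extendSubtype_mem j hj
    · rw [Finset.card_map, s.2, t.2]
  rw [← hπ, ← SzProd_perm, ← PP_perm (rho π)]
  simp only [GG_perm]

lemma sx_perm {N p : ℕ} (β J b : ℝ) (i j : Fin N) :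
    ∫ x, GG N p β J b (Sx N j) x ∂(PP N p) = ∫ x, GG N p β J b (Sx N i) x ∂(PP N p) := by
  rw [← Equiv.swap_apply_left i j, ← Sx_perm, ← PP_perm (rho (Equiv.swap i j))]
  simp only [GG_perm, Equiv.swap_apply_left]

open Matrix MeasureTheory ProbabilityTheory

lemma UNp_restr (N p : ℕ) (g : Finset (Fin N) → ℝ) :
    UNp N p (ext' (fun t : TT N p => g t.1)) = UNp N p g := by
  unfold UNp
  congr 1
  refine Finset.sum_congr rfl fun s _ => ?_
  by_cases h : s.card = p
  · simp [ext', h]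
  · simp [h]

lemma HNp_restr (N p : ℕ) (J b : ℝ) (g : Finset (Fin N) → ℝ) :
    HNp N p J b (ext' (fun t : TT N p => g t.1)) = HNp N p J b g := by
  unfold HNp; rw [UNp_restr]

lemma gibbs_UNp (N p : ℕ) (β J b : ℝ) (x : TT N p → ℝ) :
    gibbs β (HNp N p J b (ext' x)) (UNp N p (ext' x))
      = -(Real.sqrt ((Nat.factorial p : ℝ) / (2 * (N : ℝ) ^ (p - 1)))) *
        ∑ t : TT N p, x t * GG N p β J b (SzProd N t.1) x := by
  have hU : UNp N p (ext' x) = (-(Real.sqrt ((Nat.factorial p : ℝ) / (2 * (N : ℝ) ^ (p - 1))))) •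
      ∑ t : TT N p, x t • SzProd N t.1 := by
    unfold UNp
    congr 1
    rw [← Finset.sum_filter]
    rw [Finset.sum_subtype (p := fun s : Finset (Fin N) => s.card = p) _ (by simp)]
    refine Finset.sum_congr rfl fun t _ => ?_
    simp [ext', t.2]
  rw [hU]
  unfold GG
  generalize HNp N p J b (ext' x) = H
  unfold gibbs
  rw [mul_smul_comm, Matrix.trace_smul, Finset.mul_sum, Matrix.trace_sum, Finset.smul_sum, Finset.sum_div,
    Complex.re_sum, Finset.mul_sum]
  refine Finset.sum_congr rfl fun t _ => ?_
  rw [mul_smul_comm, Matrix.trace_smul, smul_div_assoc, smul_div_assoc, Complex.smul_re, Complex.smul_re]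
  simp

lemma map_restr {Ω : Type*} [MeasurableSpace Ω] (μ : Measure Ω) [IsProbabilityMeasure μ] (p N : ℕ)
    (g : Ω → Finset (Fin N) → ℝ)
    (hmeas : ∀ s : Finset (Fin N), Measurable fun ω => g ω s)
    (hgauss : ∀ s : Finset (Fin N), s.card = p →
      Measure.map (fun ω => g ω s) μ = gaussianReal 0 1)
    (hindep : iIndepFun
      (fun (s : {t : Finset (Fin N) // t.card = p}) ω => g ω s.1) μ) :
    Measure.map (fun ω (t : TT N p) => g ω t.1) μ = PP N p := by
  have := (iIndepFun_iff_map_fun_eq_pi_map (fun t : TT N p => (hmeas t.1).aemeasurable)).1 hindep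
  rw [this, PP]
  congr 1
  funext t
  exact hgauss t.1 t.2

lemma const_id (N p : ℕ) (hp : 2 ≤ p) (hN : p ≤ N) :
    ((Nat.factorial p : ℝ) / (2 * (N : ℝ) ^ (p - 1))) * (N.choose p : ℝ) = N * alphaP N p / 2 := by
  unfold alphaP
  have h := Nat.choose_mul_factorial_mul_factorial hN
  have h' : (N.choose p : ℝ) * p.factorial * (N - p).factorial = N.factorial := by exact_mod_cast h
  rw [← h']
  have hN0 : (N : ℝ) ≠ 0 := by
    have : N ≠ 0 := by omega
    exact_mod_cast this
  have hf : ((N - p).factorial : ℝ) ≠ 0 := by exact_mod_cast Nat.factorial_ne_zero _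
  obtain ⟨q, rfl⟩ : ∃ q, p = q + 1 := ⟨p - 1, by omega⟩
  rw [Nat.add_sub_cancel, pow_succ]
  field_simp

theorem stmt18
    {Ω : Type*} [MeasurableSpace Ω] (μ : Measure Ω) [IsProbabilityMeasure μ]
    (p N : ℕ) (hp : 2 ≤ p) (hN : p ≤ N)
    (β J b : ℝ) (hβ : 0 < β) (hJ : 0 < J) (hb : 0 ≤ b)
    (g : Ω → Finset (Fin N) → ℝ)
    (hmeas : ∀ s : Finset (Fin N), Measurable fun ω => g ω s)
    (hgauss : ∀ s : Finset (Fin N), s.card = p →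
      Measure.map (fun ω => g ω s) μ = gaussianReal 0 1)
    (hindep : iIndepFun
      (fun (s : {t : Finset (Fin N) // t.card = p}) ω => g ω s.1) μ)
    (Φ : ℝ → ℝ) (hΦ : ∀ r : ℝ, 0 < r → Φ (r * Real.tanh r) = Real.tanh r / r)
    (hΦ0 : Φ 0 = 1) :
    (∫ ω, (gibbs β (HNp N p J b (g ω)) (SzProd N (firstP N p))) ^ 2 ∂μ)
      ≥ Φ ((p : ℝ) * β * b *
            ∫ ω, gibbs β (HNp N p J b (g ω)) (Sx N ⟨0, by omega⟩) ∂μ)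
        + (2 / (β * J * (N : ℝ) * alphaP N p))
            * ∫ ω, gibbs β (HNp N p J b (g ω)) (UNp N p (g ω)) ∂μ := by
  have hR : Measurable (fun ω (t : TT N p) => g ω t.1) := measurable_pi_iff.2 fun t => hmeas t.1
  have hmap := map_restr μ p N g hmeas hgauss hindep
  have tr : ∀ F : (TT N p → ℝ) → ℝ, Continuous F →
      ∫ ω, F (fun t => g ω t.1) ∂μ = ∫ x, F x ∂(PP N p) := by
    intro F hF
    rw [← hmap, integral_map hR.aemeasurable hF.aestronglyMeasurable]
  have e1 : ∫ ω, (gibbs β (HNp N p J b (g ω)) (SzProd N (firstP N p))) ^ 2 ∂μ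
      = ∫ x, GG N p β J b (SzProd N (firstP N p)) x ^ 2 ∂(PP N p) := by
    rw [← tr (fun x => GG N p β J b (SzProd N (firstP N p)) x ^ 2) ((GG_cont N p β J b _).pow 2)]
    simp only [GG, HNp_restr]
  have e2 : ∀ j, ∫ ω, gibbs β (HNp N p J b (g ω)) (Sx N j) ∂μ
      = ∫ x, GG N p β J b (Sx N j) x ∂(PP N p) := by
    intro j
    rw [← tr _ (GG_cont N p β J b _)]
    simp only [GG, HNp_restr]
  set c := Real.sqrt ((Nat.factorial p : ℝ) / (2 * (N : ℝ) ^ (p - 1))) with hc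
  have e3 : ∫ ω, gibbs β (HNp N p J b (g ω)) (UNp N p (g ω)) ∂μ
      = -c * ∑ t : TT N p, ∫ x, x t * GG N p β J b (SzProd N t.1) x ∂(PP N p) := by
    rw [← integral_finsetSum _ fun t _ => coord_mul_int N p β J b t, ← integral_const_mul,
      ← tr]
    · congr 1
      funext ω
      rw [← gibbs_UNp, HNp_restr, UNp_restr]
    · refine continuous_const.mul (continuous_finsetSum _ fun t _ => ?_)
      exact (continuous_apply t).mul (GG_cont N p β J b _)
  rw [e1, e2, e3]
  have hfc : (firstP N p).card = p := by
    unfold firstP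
    rw [Fin.card_filter_val_lt]; omega
  let f : TT N p := ⟨firstP N p, hfc⟩
  set S := ∫ x, GG N p β J b (Sx N ⟨0, by omega⟩) x ∂(PP N p) with hS
  have hsum : ∀ t : TT N p, β * b * ∑ j ∈ t.1, ∫ x, GG N p β J b (Sx N j) x ∂(PP N p) = p * β * b * S := by
    intro t
    rw [Finset.sum_congr rfl fun j _ => sx_perm β J b ⟨0, by omega⟩ j, Finset.sum_const, t.2, nsmul_eq_mul]
    ring
  have hx : 0 ≤ p * β * b * S := by
    rw [← hsum f, ← integral_finsetSum _ fun j _ => GG_int N p β J b _ (Sx_herm N j) (Sx_sq N j),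
      ← integral_const_mul]
    exact integral_nonneg fun x => sx_nonneg N p β J b _ _
  obtain ⟨C, m, hSu, hΦe⟩ := exists_supp Φ hΦ hΦ0 _ hx
  have hN0 : (0 : ℝ) < N := by
    have : 0 < N := by omega
    exact_mod_cast this
  have hk : 0 ≤ kap N p β J := by unfold kap; positivity
  set Q := ∫ x, GG N p β J b (SzProd N (firstP N p)) x ^ 2 ∂(PP N p) with hQ
  have hall : ∀ t : TT N p, kap N p β J * (Φ (p * β * b * S) - Q) ≤
      ∫ x, x t * GG N p β J b (SzProd N t.1) x ∂(PP N p) := by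
    intro t
    have h := ibp N p β J b hk t C m hSu
    rw [hsum t, sq_perm β J b f t, ← hΦe] at h
    exact h
  have htot := Finset.sum_le_sum fun t (_ : t ∈ (Finset.univ : Finset (TT N p))) => hall t
  rw [Finset.sum_const, Finset.card_univ, Fintype.card_finset_len, Fintype.card_fin, nsmul_eq_mul] at htot
  set W := ∑ t : TT N p, ∫ x, x t * GG N p β J b (SzProd N t.1) x ∂(PP N p) with hW
  have hα : 0 < alphaP N p := by unfold alphaP; positivity
  have hcc : c * c = (Nat.factorial p : ℝ) / (2 * (N : ℝ) ^ (p - 1)) := Real.mul_self_sqrt (by positivity)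
  have hc0 : 0 ≤ c := Real.sqrt_nonneg _
  have hid := const_id N p hp hN
  rw [← hcc] at hid
  have h1 := mul_le_mul_of_nonneg_left htot hc0
  have h2 : c * ((N.choose p : ℝ) * (kap N p β J * (Φ (p * β * b * S) - Q)))
      = (β * J * N * alphaP N p / 2) * (Φ (p * β * b * S) - Q) := by
    have : kap N p β J = β * J * c := rfl
    rw [this]
    linear_combination (β * J * (Φ (p * β * b * S) - Q)) * hid
  rw [h2] at h1
  have hD : 0 < β * J * N * alphaP N p := by positivity
  set D := β * J * N * alphaP N p with hDd
  have h3 : Φ (p * β * b * S) - Q ≤ 2 / D * (c * W) := by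
    rw [div_mul_eq_mul_div, le_div_iff₀ hD]
    linarith
  linarith [h3, show 2 / D * (-c * W) = -(2 / D * (c * W)) by ring]
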